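/- For the Split-AI learner (which trains K sub-models on overlapping subsets of the member set and answers each query on a point using only the L sub-models whose training sets exclude that point, as described below), every direct single-query membership-inference adversary has success probability exactly 1/2. Precisely: for every dataset x : Fin (2n) → 𝒳, every training map train, and every adversary A : Fin (2n) × (Fin k → ℝ) → PMF Bool, if the game samples the challenge index i uniformly from Fin (2n), then the probability (over the membership vector b, the non-model index sets Id_non, the choice i' for non-member queries, the uniform i, and A's internal randomness) that A(i, r_i) outputs b i is exactly 1/2. -/

import Mathlib

/-!
Statement 0: For the Split-AI learner, every direct single-query membership-inference
adversary has success probability exactly 1/2.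
-/

open scoped BigOperators

noncomputable section

/-- Boolean vectors of length `2n` with Hamming weight exactly `n`. -/
def weightVectors (n : ℕ) : Finset (Fin (2 * n) → Bool) :=
  Finset.univ.filter (fun b => (Finset.univ.filter (fun i => b i = true)).card = n)

lemma weightVectors_nonempty (n : ℕ) : (weightVectors n).Nonempty := by
  obtain ⟨S, -, hS⟩ :=
    Finset.exists_subset_card_eq
      (show n ≤ (Finset.univ : Finset (Fin (2 * n))).card by simp; omega)
  refine ⟨fun i => decide (i ∈ S), ?_⟩
  simp only [weightVectors, Finset.mem_filter, Finset.mem_univ, true_and]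
  have h : Finset.univ.filter (fun i : Fin (2 * n) => decide (i ∈ S) = true) = S := by
    ext i; simp
  rw [h, hS]

/-- The member set `S = {i : b i = true}`. -/
def memberSet {n : ℕ} (b : Fin (2 * n) → Bool) : Finset (Fin (2 * n)) :=
  Finset.univ.filter (fun i => b i = true)

/-- Assignments of an `L`-element subset of `Fin K` (the non-model indices) to
each index of the dataset. -/
def idnonFuns (n K L : ℕ) : Finset (Fin (2 * n) → Finset (Fin K)) :=
  Finset.univ.filter (fun f => ∀ i, (f i).card = L)

lemma idnonFuns_nonempty (n K L : ℕ) (hLK : L ≤ K) : (idnonFuns n K L).Nonempty := by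
  obtain ⟨T, -, hT⟩ :=
    Finset.exists_subset_card_eq
      (show L ≤ (Finset.univ : Finset (Fin K)).card by simpa using hLK)
  exact ⟨fun _ => T, by simp [idnonFuns, hT]⟩

/-- Uniform distribution on a finset, with a default value if the finset is empty. -/
def uniformOn' {α : Type*} (s : Finset α) (d : α) : PMF α :=
  if h : s.Nonempty then PMF.uniformOfFinset s h else PMF.pure d

/-- The sub-model `F_m`, trained (via `train`) on the data points of the members `j`
with `m ∉ Id_non(j)`. -/
def subModel {n K k : ℕ} {𝒳 : Type*} [DecidableEq 𝒳]
    (x : Fin (2 * n) → 𝒳) (train : Finset 𝒳 → 𝒳 → Fin k → ℝ)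
    (b : Fin (2 * n) → Bool) (Idnon : Fin (2 * n) → Finset (Fin K)) (m : Fin K) :
    𝒳 → Fin k → ℝ :=
  train (((memberSet b).filter (fun j => m ∉ Idnon j)).image x)

/-- The Split-AI answer `r_i` on the query at index `i`: the average of the `L`
sub-models with indices in `Id_non(i)` if `i` is a member, and in `Id_non(i')`
otherwise. -/
def splitAIAnswer {n K k : ℕ} (L : ℕ) {𝒳 : Type*} [DecidableEq 𝒳]
    (x : Fin (2 * n) → 𝒳) (train : Finset 𝒳 → 𝒳 → Fin k → ℝ)
    (b : Fin (2 * n) → Bool) (Idnon : Fin (2 * n) → Finset (Fin K))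
    (i' i : Fin (2 * n)) : Fin k → ℝ :=
  fun c =>
    if b i then (L : ℝ)⁻¹ * ∑ m ∈ Idnon i, subModel x train b Idnon m (x i) c
    else (L : ℝ)⁻¹ * ∑ m ∈ Idnon i', subModel x train b Idnon m (x i) c

/-- The Split-AI direct single-query membership-inference game: sample the membership
vector `b` uniformly from the weight-`n` vectors, the non-model index sets `Id_non`
uniformly and independently, `i'` uniformly from the member set, the challenge index
`i` uniformly from `Fin (2n)`, give `(i, r_i)` to the adversary `A`, and output
whether `A`'s guess equals `b i`. -/
def splitAIGame {n K L k : ℕ} (hn : 0 < n) (hLK : L ≤ K) {𝒳 : Type*} [DecidableEq 𝒳]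
    (x : Fin (2 * n) → 𝒳) (train : Finset 𝒳 → 𝒳 → Fin k → ℝ)
    (A : Fin (2 * n) × (Fin k → ℝ) → PMF Bool) : PMF Bool :=
  have h2n : 0 < 2 * n := by omega
  (PMF.uniformOfFinset (weightVectors n) (weightVectors_nonempty n)).bind fun b =>
    (PMF.uniformOfFinset (idnonFuns n K L) (idnonFuns_nonempty n K L hLK)).bind fun Idnon =>
      (uniformOn' (memberSet b) ⟨0, h2n⟩).bind fun i' =>
        (PMF.uniformOfFinset (Finset.univ : Finset (Fin (2 * n)))
            ⟨⟨0, h2n⟩, Finset.mem_univ _⟩).bind fun i =>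
          (A (i, splitAIAnswer L x train b Idnon i' i)).map fun c => decide (c = b i)

/-!
Pair every member `p` with every non-member `q`. A challenge at `p` is answered from `Id_non(p)`
whatever `i'` is, and a challenge at `q` with `i' = p` is answered from `Id_non(p)` too. Exchanging
the roles of `p` and `q` in `b` and `Id_non` preserves the distribution of the game, and it also
preserves every sub-model `F_m` with `m ∈ Id_non(p)`, since neither index contributes to its
training set. Hence the adversary sees the same answer whether the challenged point is the member or the
non-member, and it is as likely to be right as to be wrong.
-/

section Probability

lemma uniformOfFinset_bind_apply {α β : Type*} (s : Finset α) (hs : s.Nonempty) (f : α → PMF β)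
    (y : β) :
    (PMF.uniformOfFinset s hs).bind f y = (s.card : ENNReal)⁻¹ * ∑ a ∈ s, f a y := by
  rw [PMF.bind_apply, tsum_eq_sum (s := s), Finset.mul_sum]
  · exact Finset.sum_congr rfl fun a ha => by rw [PMF.uniformOfFinset_apply_of_mem hs ha]
  · intro a ha
    rw [PMF.uniformOfFinset_apply_of_notMem hs ha, zero_mul]

lemma map_decide_eq_apply (p : PMF Bool) (v w : Bool) :
    (p.map fun c => decide (c = v)) w = p (v == w) := by
  rw [PMF.map_apply, tsum_fintype]
  cases v <;> cases w <;> simp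

lemma apply_true_eq_half_of_apply_true_eq_apply_false {p : PMF Bool} (h : p true = p false) :
    p true = 1 / 2 := by
  have total : p true + p false = 1 := by
    rw [← Fintype.sum_bool p, ← tsum_fintype (L := .unconditional Bool), p.tsum_coe]
  rw [← h, ← mul_two] at total
  rw [one_div, ENNReal.eq_inv_of_mul_eq_one_left total]

end Probability

lemma sum_sum_add_sum_eq_sum_sum_add_of_card_eq {ι κ M : Type*} [AddCommMonoid M] {s : Finset ι}
    {t : Finset κ} (hst : s.card = t.card) (f : ι → M) (g : ι → κ → M) :
    ∑ p ∈ s, (∑ q ∈ s, f q + ∑ q ∈ t, g p q) = ∑ p ∈ s, ∑ q ∈ t, (f p + g p q) := by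
  simp only [Finset.sum_add_distrib, Finset.sum_const, ← Finset.sum_nsmul, hst]

section SampleSpace

variable {n K L : ℕ}

lemma mem_memberSet {b : Fin (2 * n) → Bool} {i : Fin (2 * n)} : i ∈ memberSet b ↔ b i = true := by
  simp [memberSet]

lemma mem_weightVectors {b : Fin (2 * n) → Bool} :
    b ∈ weightVectors n ↔ (memberSet b).card = n := by
  simp [weightVectors, memberSet]

lemma mem_idnonFuns {Idnon : Fin (2 * n) → Finset (Fin K)} :
    Idnon ∈ idnonFuns n K L ↔ ∀ i, (Idnon i).card = L := by
  simp [idnonFuns]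

lemma card_memberSet_eq_card_compl {b : Fin (2 * n) → Bool} (hb : b ∈ weightVectors n) :
    (memberSet b).card = (memberSet b)ᶜ.card := by
  rw [Finset.card_compl, mem_weightVectors.1 hb, Fintype.card_fin]
  omega

lemma comp_perm_mem_weightVectors {b : Fin (2 * n) → Bool} (hb : b ∈ weightVectors n)
    (σ : Equiv.Perm (Fin (2 * n))) : b ∘ σ ∈ weightVectors n := by
  rw [mem_weightVectors] at hb ⊢
  exact (Finset.card_equiv σ fun i => by simp only [mem_memberSet, Function.comp_apply]).trans hb

lemma comp_perm_mem_idnonFuns {Idnon : Fin (2 * n) → Finset (Fin K)}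
    (h : Idnon ∈ idnonFuns n K L) (σ : Equiv.Perm (Fin (2 * n))) :
    Idnon ∘ σ ∈ idnonFuns n K L :=
  mem_idnonFuns.2 fun i => mem_idnonFuns.1 h (σ i)

/-- A membership vector `b` and non-model index sets `Id_non`, together with two marked indices
`p` and `q`, as a tuple `⟨(b, Id_non), (p, q)⟩`. A sigma type is used so that the range of `(p, q)`
can be restricted depending on `b`. -/
abbrev MarkedOutcome (n K : ℕ) : Type :=
  Σ _ : (Fin (2 * n) → Bool) × (Fin (2 * n) → Finset (Fin K)), Fin (2 * n) × Fin (2 * n)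

/-- The outcomes `⟨(b, Id_non), (p, q)⟩` of the first two sampling steps of the game in which the
marked index `p` is a member and `q` is a non-member. -/
def pairedOutcomes (n K L : ℕ) : Finset (MarkedOutcome n K) :=
  (weightVectors n ×ˢ idnonFuns n K L).sigma fun ω => memberSet ω.1 ×ˢ (memberSet ω.1)ᶜ

lemma mem_pairedOutcomes {b : Fin (2 * n) → Bool} {Idnon : Fin (2 * n) → Finset (Fin K)}
    {p q : Fin (2 * n)} :
    ⟨(b, Idnon), (p, q)⟩ ∈ pairedOutcomes n K L ↔
      (b ∈ weightVectors n ∧ Idnon ∈ idnonFuns n K L) ∧ b p = true ∧ b q = false := by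
  simp [pairedOutcomes, mem_memberSet]

lemma sum_pairedOutcomes {M : Type*} [AddCommMonoid M]
    (f : (Fin (2 * n) → Bool) → (Fin (2 * n) → Finset (Fin K)) →
      Fin (2 * n) → Fin (2 * n) → M) :
    ∑ ω ∈ pairedOutcomes n K L, f ω.1.1 ω.1.2 ω.2.1 ω.2.2 =
      ∑ b ∈ weightVectors n, ∑ Idnon ∈ idnonFuns n K L,
        ∑ p ∈ memberSet b, ∑ q ∈ (memberSet b)ᶜ, f b Idnon p q := by
  simp only [pairedOutcomes, Finset.sum_sigma, Finset.sum_product]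

/-- Exchange the roles of `p` and `q` in an outcome `⟨(b, Id_non), (p, q)⟩`: when `p` is a member
and `q` is not, `q` becomes the member and takes over the non-model indices of `p`. -/
def swapOutcome (ω : MarkedOutcome n K) : MarkedOutcome n K :=
  ⟨(ω.1.1 ∘ Equiv.swap ω.2.1 ω.2.2, ω.1.2 ∘ Equiv.swap ω.2.1 ω.2.2), ω.2.swap⟩

lemma swapOutcome_involutive : Function.Involutive (swapOutcome (n := n) (K := K)) := by
  rintro ⟨⟨b, Idnon⟩, p, q⟩
  simp [swapOutcome, Function.comp_assoc, Equiv.swap_comm q p, ← Equiv.coe_trans]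

lemma swapOutcome_mem_pairedOutcomes {ω : MarkedOutcome n K} (hω : ω ∈ pairedOutcomes n K L) :
    swapOutcome ω ∈ pairedOutcomes n K L := by
  obtain ⟨⟨b, Idnon⟩, p, q⟩ := ω
  obtain ⟨⟨hb, hId⟩, hp, hq⟩ := mem_pairedOutcomes.1 hω
  exact mem_pairedOutcomes.2
    ⟨⟨comp_perm_mem_weightVectors hb _, comp_perm_mem_idnonFuns hId _⟩, by simpa, by simpa⟩

end SampleSpace

section Answer

variable {n K k : ℕ} {𝒳 : Type*} [DecidableEq 𝒳]
  (x : Fin (2 * n) → 𝒳) (train : Finset 𝒳 → 𝒳 → Fin k → ℝ)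
  {b : Fin (2 * n) → Bool} {Idnon : Fin (2 * n) → Finset (Fin K)} {p q : Fin (2 * n)}

lemma subModel_comp_swap {m : Fin K} (hm : m ∈ Idnon p) (hq : b q = false) :
    subModel x train (b ∘ Equiv.swap p q) (Idnon ∘ Equiv.swap p q) m =
      subModel x train b Idnon m := by
  have same_training_indices :
      (memberSet (b ∘ Equiv.swap p q)).filter (fun j => m ∉ (Idnon ∘ Equiv.swap p q) j) =
        (memberSet b).filter (fun j => m ∉ Idnon j) := by
    ext j
    simp only [Finset.mem_filter, mem_memberSet, Function.comp_apply]
    rcases eq_or_ne j p with rfl | hjp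
    · simp [hq, hm]
    rcases eq_or_ne j q with rfl | hjq
    · simp [hq, hm]
    rw [Equiv.swap_apply_of_ne_of_ne hjp hjq]
  rw [subModel, subModel, same_training_indices]

lemma splitAIAnswer_of_member (L : ℕ) {i i' : Fin (2 * n)} (hi : b i = true) :
    splitAIAnswer L x train b Idnon i' i = splitAIAnswer L x train b Idnon i i := by
  unfold splitAIAnswer
  simp only [hi, if_true]

lemma splitAIAnswer_comp_swap (L : ℕ) (hp : b p = true) (hq : b q = false) :
    splitAIAnswer L x train (b ∘ Equiv.swap p q) (Idnon ∘ Equiv.swap p q) q p =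
      splitAIAnswer L x train b Idnon p p := by
  funext c
  simp only [splitAIAnswer, Function.comp_apply, Equiv.swap_apply_left, Equiv.swap_apply_right,
    hp, hq, if_true, Bool.false_eq_true, if_false]
  congr 1
  exact Finset.sum_congr rfl fun m hm => by rw [subModel_comp_swap x train hm hq]

end Answer

section Game

variable {n K L k : ℕ} {𝒳 : Type*} [DecidableEq 𝒳]
  (x : Fin (2 * n) → 𝒳) (train : Finset 𝒳 → 𝒳 → Fin k → ℝ)

lemma sum_pairedOutcomes_member_eq_nonmember {M : Type*} [AddCommMonoid M]
    (F : Fin (2 * n) → (Fin k → ℝ) → M) :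
    ∑ ω ∈ pairedOutcomes n K L,
        F ω.2.1 (splitAIAnswer L x train ω.1.1 ω.1.2 ω.2.1 ω.2.1) =
      ∑ ω ∈ pairedOutcomes n K L,
        F ω.2.2 (splitAIAnswer L x train ω.1.1 ω.1.2 ω.2.1 ω.2.2) := by
  refine Finset.sum_nbij' swapOutcome swapOutcome
    (fun _ => swapOutcome_mem_pairedOutcomes) (fun _ => swapOutcome_mem_pairedOutcomes)
    (fun ω _ => swapOutcome_involutive ω) (fun ω _ => swapOutcome_involutive ω) ?_
  rintro ⟨⟨b, Idnon⟩, p, q⟩ hω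
  obtain ⟨-, hp, hq⟩ := mem_pairedOutcomes.1 hω
  exact congrArg (F p) (splitAIAnswer_comp_swap x train L hp hq).symm

variable (A : Fin (2 * n) × (Fin k → ℝ) → PMF Bool)

lemma splitAIGame_apply (hn : 0 < n) (hLK : L ≤ K) (w : Bool) :
    splitAIGame hn hLK x train A w =
      ((weightVectors n).card : ENNReal)⁻¹ * ∑ b ∈ weightVectors n,
        ((idnonFuns n K L).card : ENNReal)⁻¹ * ∑ Idnon ∈ idnonFuns n K L,
          (n : ENNReal)⁻¹ * ∑ i' ∈ memberSet b,
            ((2 * n : ℕ) : ENNReal)⁻¹ * ∑ i,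
              A (i, splitAIAnswer L x train b Idnon i' i) (b i == w) := by
  rw [splitAIGame, uniformOfFinset_bind_apply]
  congr 1
  refine Finset.sum_congr rfl fun b hb => ?_
  have card_members : (memberSet b).card = n := mem_weightVectors.1 hb
  have members_nonempty : (memberSet b).Nonempty := by rwa [← Finset.card_pos, card_members]
  -- The non-emptiness proof in `splitAIGame` is typed as an `∃`, which `simp` does not unify with
  -- `Finset.Nonempty`.
  have average_challenge (f : Fin (2 * n) → PMF Bool) :
      (PMF.uniformOfFinset Finset.univ ⟨⟨0, Nat.mul_pos two_pos hn⟩, Finset.mem_univ _⟩).bind f w =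
        ((2 * n : ℕ) : ENNReal)⁻¹ * ∑ i, f i w :=
    (uniformOfFinset_bind_apply _ _ _ _).trans (by rw [Finset.card_fin])
  simp only [uniformOn', dif_pos members_nonempty, uniformOfFinset_bind_apply, average_challenge,
    map_decide_eq_apply, card_members]

lemma sum_sum_guess_eq_sum_member_nonmember {b : Fin (2 * n) → Bool} (hb : b ∈ weightVectors n)
    (Idnon : Fin (2 * n) → Finset (Fin K)) (w : Bool) :
    ∑ i' ∈ memberSet b, ∑ i, A (i, splitAIAnswer L x train b Idnon i' i) (b i == w) =
      ∑ p ∈ memberSet b, ∑ q ∈ (memberSet b)ᶜ,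
        (A (p, splitAIAnswer L x train b Idnon p p) w +
          A (q, splitAIAnswer L x train b Idnon p q) (!w)) := by
  rw [← sum_sum_add_sum_eq_sum_sum_add_of_card_eq (card_memberSet_eq_card_compl hb)
    (fun p => A (p, splitAIAnswer L x train b Idnon p p) w)]
  refine Finset.sum_congr rfl fun i' _ => ?_
  rw [← Finset.sum_add_sum_compl (memberSet b)]
  congr 1 <;> refine Finset.sum_congr rfl fun i hi => ?_
  · have hbi : b i = true := mem_memberSet.1 hi
    rw [splitAIAnswer_of_member x train L hbi, hbi, Bool.true_beq]
  · have hbi : b i = false := by simpa [mem_memberSet] using hi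
    rw [hbi, Bool.false_beq]

lemma splitAIGame_apply_eq_sum_pairedOutcomes (hn : 0 < n) (hLK : L ≤ K) (w : Bool) :
    splitAIGame hn hLK x train A w =
      ((weightVectors n).card : ENNReal)⁻¹ * (((idnonFuns n K L).card : ENNReal)⁻¹ *
        ((n : ENNReal)⁻¹ * (((2 * n : ℕ) : ENNReal)⁻¹ *
          ∑ ω ∈ pairedOutcomes n K L,
            (A (ω.2.1, splitAIAnswer L x train ω.1.1 ω.1.2 ω.2.1 ω.2.1) w +
              A (ω.2.2, splitAIAnswer L x train ω.1.1 ω.1.2 ω.2.1 ω.2.2) (!w))))) := by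
  rw [splitAIGame_apply, sum_pairedOutcomes fun b Idnon p q =>
    A (p, splitAIAnswer L x train b Idnon p p) w +
      A (q, splitAIAnswer L x train b Idnon p q) (!w)]
  simp only [← Finset.mul_sum]
  rw [Finset.sum_congr rfl fun b hb => Finset.sum_congr rfl fun Idnon _ =>
    sum_sum_guess_eq_sum_member_nonmember x train A hb Idnon w]

lemma splitAIGame_apply_true_eq_apply_false (hn : 0 < n) (hLK : L ≤ K) :
    splitAIGame hn hLK x train A true = splitAIGame hn hLK x train A false := by
  have member_eq_nonmember (w : Bool) :=
    sum_pairedOutcomes_member_eq_nonmember (K := K) (L := L) x train fun i r => A (i, r) w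
  simp only [splitAIGame_apply_eq_sum_pairedOutcomes, Finset.sum_add_distrib, member_eq_nonmember,
    Bool.not_true, Bool.not_false]
  rw [add_comm]

end Game

/-- the success probability of any direct single-query
membership-inference adversary against Split-AI is exactly `1/2`. -/
theorem splitAI_SQMI_eq_half
    (n K L k : ℕ) (hn : 0 < n) (hL : 1 ≤ L) (hLK : L ≤ K)
    {𝒳 : Type*} [DecidableEq 𝒳]
    (x : Fin (2 * n) → 𝒳) (train : Finset 𝒳 → 𝒳 → Fin k → ℝ)
    (A : Fin (2 * n) × (Fin k → ℝ) → PMF Bool) :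
    splitAIGame hn hLK x train A true = 1 / 2 := by
  exact apply_true_eq_half_of_apply_true_eq_apply_false
    (splitAIGame_apply_true_eq_apply_false x train A hn hLK)

end
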